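/- For every real number x ≥ 1865, one has Li(x) < x/log x + 3x/(2·(log x)²). -/

import Mathlib

/-- `Li(x) = ∫₂ˣ dt / log t`, the logarithmic integral. -/
noncomputable def Li (x : ℝ) : ℝ := ∫ t in (2 : ℝ)..x, 1 / Real.log t

open Real

/-- A polynomial `P` such that `t * P (log t)` grows at least as fast as `Li` on `[2, ∞)`, with
little loss up to `t = 1800`; see `mul_eval_add_deriv_liMajorant`. -/
noncomputable def liMajorant (u : ℝ) : ℝ :=
  (3367911210 - 3073860960 * u + 1342858080 * u ^ 2 - 360173600 * u ^ 3
    + 63913024 * u ^ 4 - 7578112 * u ^ 5 + 579328 * u ^ 6 - 25856 * u ^ 7 + 512 * u ^ 8) / 77000625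

/-- The derivative of `liMajorant`. -/
noncomputable def liMajorantDeriv (u : ℝ) : ℝ :=
  (-3073860960 + 2685716160 * u - 1080520800 * u ^ 2 + 255652096 * u ^ 3
    - 37890560 * u ^ 4 + 3475968 * u ^ 5 - 180992 * u ^ 6 + 4096 * u ^ 7) / 77000625

theorem hasDerivAt_liMajorant (u : ℝ) : HasDerivAt liMajorant (liMajorantDeriv u) u := by
  have hpow (c : ℝ) (n : ℕ) : HasDerivAt (fun v : ℝ => c * v ^ n) (c * (n * u ^ (n - 1))) u :=
    (hasDerivAt_pow n u).const_mul c
  have h := (((((((((hpow 3367911210 0).add (hpow (-3073860960) 1)).add (hpow 1342858080 2)).add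
    (hpow (-360173600) 3)).add (hpow 63913024 4)).add (hpow (-7578112) 5)).add
    (hpow 579328 6)).add (hpow (-25856) 7)).add (hpow 512 8)).div_const 77000625
  refine (h.congr_deriv ?_).congr_of_eventuallyEq (.of_forall fun v => ?_)
  · simp only [liMajorantDeriv]
    norm_num
    ring
  · simp only [liMajorant, Pi.add_apply]
    ring

theorem mul_eval_add_deriv_liMajorant (u : ℝ) :
    u * (liMajorant u + liMajorantDeriv u) =
      1 + (2 * u - 1) * ((1 - 2 * u / 5) * (1 - 2 * u / 9) * (1 - 2 * u / 13) *
        (1 - 2 * u / 15)) ^ 2 := by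
  simp only [liMajorant, liMajorantDeriv]
  ring

theorem one_half_lt_log_of_two_le {t : ℝ} (ht : 2 ≤ t) : 1 / 2 < log t := by
  have := log_le_log two_pos ht
  linarith [log_two_gt_d9]

theorem one_div_log_le {t : ℝ} (ht : 2 ≤ t) :
    1 / log t ≤ liMajorant (log t) + liMajorantDeriv (log t) := by
  have hlog := one_half_lt_log_of_two_le ht
  rw [div_le_iff₀ (by linarith), mul_comm, mul_eval_add_deriv_liMajorant]
  exact le_add_of_nonneg_right (mul_nonneg (by linarith) (sq_nonneg _))

theorem hasDerivAt_mul_liMajorant_log {t : ℝ} (ht : t ≠ 0) :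
    HasDerivAt (fun s => s * liMajorant (log s))
      (liMajorant (log t) + liMajorantDeriv (log t)) t := by
  refine ((hasDerivAt_id t).mul
    ((hasDerivAt_liMajorant (log t)).comp t (hasDerivAt_log ht))).congr_deriv ?_
  simp only [Function.comp_apply, id]
  field_simp

theorem continuousOn_one_div_log : ContinuousOn (fun t : ℝ => 1 / log t) (Set.Ici 2) := by
  intro t ht
  have ht : 2 ≤ t := ht
  have hlog := one_half_lt_log_of_two_le ht
  exact (continuousAt_const.div (continuousAt_log (by linarith)) (by linarith)).continuousWithinAt

theorem intervalIntegrable_one_div_log {a b : ℝ} (ha : 2 ≤ a) (hb : 2 ≤ b) :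
    IntervalIntegrable (fun t : ℝ => 1 / log t) MeasureTheory.volume a b :=
  (continuousOn_one_div_log.mono fun _ ht => (le_min ha hb).trans ht.1).intervalIntegrable

theorem Li_le_mul_liMajorant_log {x : ℝ} (hx : 2 ≤ x) :
    Li x ≤ x * liMajorant (log x) - 2 * liMajorant (log 2) := by
  refine intervalIntegral.integral_le_sub_of_hasDeriv_right_of_le hx
    (g := fun s => s * liMajorant (log s))
    (g' := fun s => liMajorant (log s) + liMajorantDeriv (log s)) ?_ ?_ ?_ ?_
  · intro t ht
    exact (hasDerivAt_mul_liMajorant_log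
      (by linarith [ht.1])).continuousAt.continuousWithinAt
  · intro t ht
    exact (hasDerivAt_mul_liMajorant_log (by linarith [ht.1])).hasDerivWithinAt
  · exact (continuousOn_one_div_log.mono Set.Icc_subset_Ici_self).integrableOn_Icc
  · intro t ht
    exact one_div_log_le ht.1.le

theorem log_1800_eq : log 1800 = 3 * log 2 + 2 * log 3 + 2 * log 5 := by
  rw [show (1800 : ℝ) = 2 ^ 3 * 3 ^ 2 * 5 ^ 2 by norm_num, log_mul (by norm_num) (by norm_num),
    log_mul (by norm_num) (by norm_num), log_pow, log_pow, log_pow]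
  norm_num

theorem Li_1800_lt : Li 1800 < 1800 / log 1800 + 3 * 1800 / (2 * log 1800 ^ 2) := by
  have hlower : 7.4955419420 < log 1800 := by
    linarith [log_1800_eq, log_two_gt_d9, log_three_gt_d9, log_five_gt_d9]
  have hupper : log 1800 < 7.4955419455 := by
    linarith [log_1800_eq, log_two_lt_d9, log_three_lt_d9, log_five_lt_d9]
  have hLi := Li_le_mul_liMajorant_log (x := 1800) (by norm_num)
  have htwo : 23 < liMajorant (log 2) := by
    have hlower (n : ℕ) : (0.6931471803 : ℝ) ^ n ≤ log 2 ^ n :=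
      pow_le_pow_left₀ (by norm_num) log_two_gt_d9.le n
    have hupper (n : ℕ) : log 2 ^ n ≤ (0.6931471808 : ℝ) ^ n :=
      pow_le_pow_left₀ (log_nonneg (by norm_num)) log_two_lt_d9.le n
    rw [liMajorant, lt_div_iff₀ (by norm_num)]
    linarith [hupper 1, hlower 2, hupper 3, hlower 4, hupper 5, hlower 6, hupper 7, hlower 8]
  have hmain : liMajorant (log 1800) < 0.1855 := by
    have hlower (n : ℕ) : (7.4955419420 : ℝ) ^ n ≤ log 1800 ^ n :=
      pow_le_pow_left₀ (by norm_num) hlower.le n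
    have hupper (n : ℕ) : log 1800 ^ n ≤ (7.4955419455 : ℝ) ^ n :=
      pow_le_pow_left₀ (log_nonneg (by norm_num)) hupper.le n
    rw [liMajorant, div_lt_iff₀ (by norm_num)]
    linarith [hlower 1, hupper 2, hlower 3, hupper 4, hlower 5, hupper 6, hlower 7, hupper 8]
  have hrhs : 288.1 < 1800 / log 1800 + 3 * 1800 / (2 * log 1800 ^ 2) :=
    calc (288.1 : ℝ) < 1800 / 7.4955419455 + 3 * 1800 / (2 * 7.4955419455 ^ 2) := by norm_num
      _ ≤ 1800 / log 1800 + 3 * 1800 / (2 * log 1800 ^ 2) := by gcongr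
  linarith

theorem hasDerivAt_div_log_add {t : ℝ} (ht : 1 < t) :
    HasDerivAt (fun s => s / log s + 3 * s / (2 * log s ^ 2))
      (1 / log t + (log t - 6) / (2 * log t ^ 3)) t := by
  have hlog : log t ≠ 0 := (log_pos ht).ne'
  have hderiv := hasDerivAt_log (show t ≠ 0 by linarith)
  refine (((hasDerivAt_id t).div hderiv hlog).add
    (((hasDerivAt_id t).const_mul 3).div ((hderiv.pow 2).const_mul 2)
      (by simpa using hlog))).congr_deriv ?_
  simp only [id, Pi.pow_apply]
  field_simp
  ring

theorem Li_sub_Li_le {a x : ℝ} (ha : 2 ≤ a) (hlog : 6 ≤ log a) (hax : a ≤ x) :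
    Li x - Li a ≤ (x / log x + 3 * x / (2 * log x ^ 2)) -
      (a / log a + 3 * a / (2 * log a ^ 2)) := by
  rw [Li, Li, intervalIntegral.integral_interval_sub_left
    (intervalIntegrable_one_div_log le_rfl (ha.trans hax))
    (intervalIntegrable_one_div_log le_rfl ha)]
  refine intervalIntegral.integral_le_sub_of_hasDeriv_right_of_le hax
    (g := fun s => s / log s + 3 * s / (2 * log s ^ 2))
    (g' := fun s => 1 / log s + (log s - 6) / (2 * log s ^ 3)) ?_ ?_ ?_ ?_
  · intro t ht
    exact (hasDerivAt_div_log_add (by linarith [ht.1])).continuousAt.continuousWithinAt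
  · intro t ht
    exact (hasDerivAt_div_log_add (by linarith [ht.1])).hasDerivWithinAt
  · exact (continuousOn_one_div_log.mono fun _ ht => ha.trans ht.1).integrableOn_Icc
  · intro t ht
    have hle : 6 ≤ log t := hlog.trans (log_le_log (by linarith) ht.1.le)
    exact le_add_of_nonneg_right (div_nonneg (by linarith) (by positivity))

theorem Li_upper_bound (x : ℝ) (hx : 1865 ≤ x) :
    Li x < x / Real.log x + 3 * x / (2 * Real.log x ^ 2) := by
  have hlog : 6 ≤ log 1800 := by
    linarith [log_1800_eq, log_two_gt_d9, log_three_gt_d9, log_five_gt_d9]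
  linarith [Li_sub_Li_le (by norm_num) hlog (show 1800 ≤ x by linarith), Li_1800_lt]
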